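/- Let U ⊆ ℝ^N be open, μ0 ∈ U, and let λ, Δ00, Δ01, Ω00, Ω10 ∈ C^∞(U) with λ > 0, Δ00 > 0 and λ(μ0) < 1; set ρ = 1/λ, λ^0 = λ(μ0), ρ^0 = 1/λ^0. Let D(s;μ) be a family of functions, defined and strictly positive for μ ∈ U and all sufficiently small s > 0, invertible with respect to s near s = 0 with inverse D^{-1}(·;μ). Assume that for every ℓ ∈ (λ^0, min{2λ^0, 1}) there is R ∈ 𝓕^∞_ℓ(μ0) with D(s;μ) = s^{λ(μ)}(Δ00(μ) + Δ01(μ)·s^{λ(μ)} + R(s;μ)), and for every η ∈ (1, min{ρ^0, 2}) there is R' ∈ 𝓕^∞_η(μ0) with D^{-1}(s;μ) = s^{ρ(μ)}(Ω00(μ) + Ω10(μ)·s + R'(s;μ)). Then, on a neighborhood of μ0, Ω00 = Δ00^{−ρ} and Ω10 = −ρ·Δ00^{−(2+ρ)}·Δ01. -/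

import Mathlib

/-!
Fix `μ` near `μ0` and write `D s = s ^ λ * A s`, so that `A → Δ00` and `(A - Δ00) / s ^ λ → Δ01` as
`s → 0`. Along `t = D s` the inverse satisfies `D⁻¹ t / t ^ ρ = s / (s * A ^ ρ) = A ^ (-ρ)`. The
differentiable function `x ↦ x ^ (-ρ)` carries the two-term expansion of `A` to one of `A ^ (-ρ)`
in powers of `s ^ λ`, and replacing `s ^ λ` by `t = s ^ λ * A` costs a further factor `Δ00⁻¹` in
the second coefficient. Comparing with the given expansion of `D⁻¹` determines `Ω00` and `Ω10`.
-/

open Topology Filter Set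

/-- Partial derivative with respect to `s`. -/
noncomputable def dS {N : ℕ} (ψ : ℝ → (Fin N → ℝ) → ℝ) : ℝ → (Fin N → ℝ) → ℝ :=
  fun s μ => deriv (fun t => ψ t μ) s

/-- Partial derivative with respect to the `i`-th component of `μ`. -/
noncomputable def dMu {N : ℕ} (i : Fin N) (ψ : ℝ → (Fin N → ℝ) → ℝ) : ℝ → (Fin N → ℝ) → ℝ :=
  fun s μ => fderiv ℝ (fun m => ψ s m) μ (Pi.single i 1)

/-- Mixed partial derivative `∂^{|ν|}ψ/(∂s^{ν0} ∂μ1^{ν1} ⋯ ∂μN^{νN})`. -/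
noncomputable def mixedDeriv {N : ℕ} (ν0 : ℕ) (ν : Fin N → ℕ) (ψ : ℝ → (Fin N → ℝ) → ℝ) :
    ℝ → (Fin N → ℝ) → ℝ :=
  (dS (N := N))^[ν0] ((List.finRange N).foldr (fun i φ => (dMu i)^[ν i] φ) ψ)

/-- ψ ∈ 𝓕^K_L(μ0): the class of (L,K)-flat functions with respect to s at μ0. -/
def MemF {N : ℕ} (K : ℕ∞) (L : ℝ) (U : Set (Fin N → ℝ)) (μ0 : Fin N → ℝ)
    (ψ : ℝ → (Fin N → ℝ) → ℝ) : Prop :=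
  (∃ ε > 0, ContDiffOn ℝ K (fun p : ℝ × (Fin N → ℝ) => ψ p.1 p.2) ((Set.Ioo 0 ε) ×ˢ U)) ∧
  ∀ ν0 : ℕ, ∀ ν : Fin N → ℕ, (↑(ν0 + ∑ i, ν i) : ℕ∞) ≤ K →
    ∃ V ⊆ U, V ∈ 𝓝 μ0 ∧ ∃ C > 0, ∃ s0 > 0, ∀ μ ∈ V, ∀ s ∈ Set.Ioo (0:ℝ) s0,
      |mixedDeriv ν0 ν ψ s μ| ≤ C * s ^ (L - (ν0 : ℝ))

/-- ψ ∈ 𝓕^K_L(W) = ⋂_{μ0 ∈ W} 𝓕^K_L(μ0). -/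
def MemFSet {N : ℕ} (K : ℕ∞) (L : ℝ) (U : Set (Fin N → ℝ)) (W : Set (Fin N → ℝ))
    (ψ : ℝ → (Fin N → ℝ) → ℝ) : Prop :=
  ∀ μ0 ∈ W, MemF K L U μ0 ψ

/-- The Écalle–Roussarie compensator. -/
noncomputable def omegaComp (s α : ℝ) : ℝ :=
  if α = 0 then -Real.log s else (s ^ (-α) - 1) / α

/-- `Λ_{i,k}(μ) = ∏_{j=i+1}^{k} λ_j(μ)` (1-based), here with 0-based index family. -/
noncomputable def LamProd {N n : ℕ} (lam : Fin n → (Fin N → ℝ) → ℝ) (i k : ℕ)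
    (μ : Fin N → ℝ) : ℝ :=
  ∏ j ∈ Finset.univ.filter (fun j : Fin n => i ≤ (j : ℕ) ∧ (j : ℕ) < k), lam j μ

/-- `A_{a+1,k}(μ) = ∏_{i=a+1}^{k} Δ_i(μ)^{Λ_{i,k}(μ)}` (1-based), 0-based lower bound `a`. -/
noncomputable def Acoef {N n : ℕ} (lam Δ : Fin n → (Fin N → ℝ) → ℝ) (a k : ℕ)
    (μ : Fin N → ℝ) : ℝ :=
  ∏ i ∈ Finset.univ.filter (fun i : Fin n => a ≤ (i : ℕ) ∧ (i : ℕ) < k),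
    (Δ i μ) ^ (LamProd lam ((i : ℕ) + 1) k μ)

/-- Composition `D_n ∘ ⋯ ∘ D_1` (0-based: `D (n-1) ∘ ⋯ ∘ D 0`). -/
noncomputable def iterComp {N n : ℕ} (D : Fin n → ℝ → (Fin N → ℝ) → ℝ) :
    ℝ → (Fin N → ℝ) → ℝ :=
  fun s μ => (List.finRange n).foldl (fun t i => D i t μ) s

open Asymptotics

lemma tendsto_rpow_nhdsGT_zero {q : ℝ} (hq : 0 < q) :
    Tendsto (fun s : ℝ => s ^ q) (𝓝[>] 0) (𝓝[>] 0) := by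
  refine tendsto_nhdsWithin_iff.2 ⟨?_, ?_⟩
  · have h : Tendsto (fun s : ℝ => s ^ q) (𝓝 0) (𝓝 (0 ^ q)) :=
      (Real.continuousAt_rpow_const 0 q (Or.inr hq.le)).tendsto
    rw [Real.zero_rpow hq.ne'] at h
    exact h.mono_left nhdsWithin_le_nhds
  · filter_upwards [self_mem_nhdsWithin] with s hs using Real.rpow_pos_of_pos hs q

lemma isLittleO_rpow_rpow_nhdsGT_zero {p q : ℝ} (hpq : p < q) :
    (fun s : ℝ => s ^ q) =o[𝓝[>] 0] fun s => s ^ p := by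
  have hpos : ∀ᶠ s : ℝ in 𝓝[>] 0, 0 < s := self_mem_nhdsWithin
  have hquot : (fun s : ℝ => s ^ (q - p)) =ᶠ[𝓝[>] 0] fun s => s ^ q / s ^ p :=
    hpos.mono fun s hs => Real.rpow_sub hs q p
  refine (isLittleO_iff_tendsto' ?_).2 (Tendsto.congr' hquot ?_)
  · filter_upwards [hpos] with s hs h using absurd h (Real.rpow_pos_of_pos hs p).ne'
  · exact (tendsto_rpow_nhdsGT_zero (sub_pos.2 hpq)).mono_right nhdsWithin_le_nhds

lemma rpow_mul_rpow_div {s A l : ℝ} (hs : 0 ≤ s) (hA : 0 ≤ A) (hl : l ≠ 0) (c : ℝ) :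
    (s ^ l * A) ^ (c / l) = s ^ c * A ^ (c / l) := by
  rw [Real.mul_rpow (Real.rpow_nonneg hs l) hA, ← Real.rpow_mul hs, mul_div_cancel₀ c hl]

lemma tendsto_comp_sub_div_of_hasDerivAt {α 𝕜 : Type*} [NontriviallyNormedField 𝕜] {F : Filter α}
    {φ : 𝕜 → 𝕜} {φ' a b : 𝕜} {u v : α → 𝕜} (hφ : HasDerivAt φ φ' a) (hu : Tendsto u F (𝓝 a))
    (huv : Tendsto (fun x => (u x - a) / v x) F (𝓝 b)) :
    Tendsto (fun x => (φ (u x) - φ a) / v x) F (𝓝 (φ' * b)) := by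
  have hslope : Tendsto (fun x => dslope φ a (u x)) F (𝓝 φ') := by
    have h : Tendsto (dslope φ a) (𝓝 a) (𝓝 (dslope φ a a)) :=
      (continuousAt_dslope_same.2 hφ.differentiableAt).tendsto
    rw [dslope_same, hφ.deriv] at h
    exact h.comp hu
  refine (hslope.mul huv).congr fun x => ?_
  rw [← sub_smul_dslope φ a (u x), smul_eq_mul, mul_div_assoc', mul_comm]

lemma eventually_nhds_eventually_nhdsGT {X : Type*} [TopologicalSpace X] {U : Set X} {x : X}
    (hU : U ∈ 𝓝 x) {P : ℝ → X → Prop}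
    (h : ∃ s0 > 0, ∀ y ∈ U, ∀ s ∈ Ioo (0 : ℝ) s0, P s y) :
    ∀ᶠ y in 𝓝 x, ∀ᶠ s in 𝓝[>] 0, P s y := by
  obtain ⟨s0, hs0, hP⟩ := h
  filter_upwards [hU] with y hy using eventually_of_mem (Ioo_mem_nhdsGT hs0) (hP y hy)

/-- `f s = s ^ p * (a + b * s ^ q + o(s ^ q))` along `F`. The factor `s ^ p` is divided out, so the
notion is meant for filters `F ≤ 𝓝[>] 0`. Filters smaller than `𝓝[>] 0` are allowed because an
expansion of the inverse of `d` is only known along the values of `d`. -/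
def HasTwoTermExpansion (F : Filter ℝ) (f : ℝ → ℝ) (p q a b : ℝ) : Prop :=
  (fun s => f s / s ^ p - (a + b * s ^ q)) =o[F] fun s => s ^ q

namespace HasTwoTermExpansion

variable {F G : Filter ℝ} {f d g r : ℝ → ℝ} {p q l a a' b b' : ℝ}

lemma mono (hf : HasTwoTermExpansion F f p q a b) (hGF : G ≤ F) :
    HasTwoTermExpansion G f p q a b :=
  IsLittleO.mono hf hGF

lemma of_eventuallyEq (hF : F ≤ 𝓝[>] 0) (hf : ∀ᶠ s in F, f s = s ^ p * (a + b * s ^ q + r s))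
    (hr : r =o[F] fun s => s ^ q) : HasTwoTermExpansion F f p q a b := by
  refine hr.congr' ?_ EventuallyEq.rfl
  filter_upwards [hf, hF self_mem_nhdsWithin] with s hfs hs
  rw [hfs, mul_div_cancel_left₀ _ (Real.rpow_pos_of_pos hs p).ne', add_sub_cancel_left]

lemma iff_tendsto (hF : F ≤ 𝓝[>] 0) :
    HasTwoTermExpansion F f p q a b ↔
      Tendsto (fun s => (f s / s ^ p - a) / s ^ q) F (𝓝 b) := by
  have hpow : ∀ᶠ s in F, s ^ q ≠ 0 := by
    filter_upwards [hF self_mem_nhdsWithin] with s hs using (Real.rpow_pos_of_pos hs q).ne'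
  rw [HasTwoTermExpansion, isLittleO_iff_tendsto' (hpow.mono fun s hs h => absurd h hs),
    ← tendsto_sub_nhds_zero_iff (x := b)]
  refine tendsto_congr' (hpow.mono fun s hs => ?_)
  simp only [← sub_sub, sub_div, mul_div_cancel_right₀ b hs]

lemma tendsto_div_rpow (hf : HasTwoTermExpansion F f p q a b) (hF : F ≤ 𝓝[>] 0) (hq : 0 < q) :
    Tendsto (fun s => f s / s ^ p) F (𝓝 a) := by
  have hpow : Tendsto (fun s : ℝ => s ^ q) F (𝓝 0) :=
    ((tendsto_rpow_nhdsGT_zero hq).mono_right nhdsWithin_le_nhds).mono_left hF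
  have h : Tendsto (fun s => (f s / s ^ p - a) / s ^ q * s ^ q + a) F (𝓝 a) := by
    simpa only [mul_zero, zero_add] using (((iff_tendsto hF).1 hf).mul hpow).add_const a
  refine h.congr' ?_
  filter_upwards [hF self_mem_nhdsWithin] with s hs
  rw [div_mul_cancel₀ _ (Real.rpow_pos_of_pos hs q).ne', sub_add_cancel]

theorem unique [F.NeBot] (hf : HasTwoTermExpansion F f p q a b)
    (hf' : HasTwoTermExpansion F f p q a' b') (hF : F ≤ 𝓝[>] 0) (hq : 0 < q) :
    a = a' ∧ b = b' := by
  obtain rfl : a = a' :=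
    tendsto_nhds_unique (hf.tendsto_div_rpow hF hq) (hf'.tendsto_div_rpow hF hq)
  exact ⟨rfl, tendsto_nhds_unique ((iff_tendsto hF).1 hf) ((iff_tendsto hF).1 hf')⟩

lemma eventually_div_rpow_pos (hf : HasTwoTermExpansion F f p q a b) (hF : F ≤ 𝓝[>] 0)
    (hq : 0 < q) (ha : 0 < a) : ∀ᶠ s in F, 0 < f s / s ^ p :=
  (hf.tendsto_div_rpow hF hq).eventually (lt_mem_nhds ha)

lemma tendsto_nhdsGT_zero (hf : HasTwoTermExpansion F f p q a b) (hF : F ≤ 𝓝[>] 0) (hp : 0 < p)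
    (hq : 0 < q) (ha : 0 < a) : Tendsto f F (𝓝[>] 0) := by
  have hspos : ∀ᶠ s in F, 0 < s := hF self_mem_nhdsWithin
  refine tendsto_nhdsWithin_iff.2 ⟨?_, ?_⟩
  · have hpow : Tendsto (fun s : ℝ => s ^ p) F (𝓝 0) :=
      ((tendsto_rpow_nhdsGT_zero hp).mono_right nhdsWithin_le_nhds).mono_left hF
    have h := hpow.mul (hf.tendsto_div_rpow hF hq)
    rw [zero_mul] at h
    exact h.congr' (hspos.mono fun s hs => mul_div_cancel₀ _ (Real.rpow_pos_of_pos hs p).ne')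
  · filter_upwards [hspos, hf.eventually_div_rpow_pos hF hq ha] with s hs hfs
    exact (div_pos_iff_of_pos_right (Real.rpow_pos_of_pos hs p)).1 hfs

theorem map_leftInverse (hd : HasTwoTermExpansion F d l q a b) (hF : F ≤ 𝓝[>] 0) (hl : 0 < l)
    (hq : 0 < q) (ha : 0 < a) (hgd : ∀ᶠ s in F, g (d s) = s) :
    HasTwoTermExpansion (map d F) g l⁻¹ (q / l) (a ^ (-l⁻¹))
      (-l⁻¹ * a ^ (-(1 + q / l + l⁻¹)) * b) := by
  rw [iff_tendsto (hd.tendsto_nhdsGT_zero hF hl hq ha), tendsto_map'_iff]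
  have hA : Tendsto (fun s => d s / s ^ l) F (𝓝 a) := hd.tendsto_div_rpow hF hq
  have hderiv : HasDerivAt (fun x : ℝ => x ^ (-l⁻¹)) (-l⁻¹ * a ^ (-l⁻¹ - 1)) a :=
    Real.hasDerivAt_rpow_const (Or.inl ha.ne')
  have hnum := tendsto_comp_sub_div_of_hasDerivAt hderiv hA ((iff_tendsto hF).1 hd)
  have hden : Tendsto (fun s => (d s / s ^ l) ^ (q / l)) F (𝓝 (a ^ (q / l))) :=
    hA.rpow_const (Or.inl ha.ne')
  have hcoeff : -l⁻¹ * a ^ (-(1 + q / l + l⁻¹)) * b =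
      -l⁻¹ * a ^ (-l⁻¹ - 1) * b / a ^ (q / l) := by
    rw [show -(1 + q / l + l⁻¹) = -l⁻¹ - 1 - q / l by ring, Real.rpow_sub ha _ (q / l)]
    ring
  rw [hcoeff]
  refine (hnum.div hden (Real.rpow_pos_of_pos ha _).ne').congr' ?_
  filter_upwards [hF self_mem_nhdsWithin, hd.eventually_div_rpow_pos hF hq ha, hgd]
    with s hs hAs hgds
  have hds : s ^ l * (d s / s ^ l) = d s := mul_div_cancel₀ _ (Real.rpow_pos_of_pos hs l).ne'
  have hratio : g (d s) / d s ^ l⁻¹ = (d s / s ^ l) ^ (-l⁻¹) := by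
    have hroot : d s ^ l⁻¹ = s * (d s / s ^ l) ^ l⁻¹ := by
      simpa only [one_div, Real.rpow_one, hds] using rpow_mul_rpow_div hs.le hAs.le hl.ne' 1
    rw [hgds, hroot, Real.rpow_neg hAs.le, div_mul_cancel_left₀ hs.ne']
  have hpow : d s ^ (q / l) = s ^ q * (d s / s ^ l) ^ (q / l) := by
    simpa only [hds] using rpow_mul_rpow_div hs.le hAs.le hl.ne' q
  rw [Pi.div_apply, Function.comp_apply, hratio, hpow, div_div]

theorem coeff_eq_of_leftInverse {w0 w1 : ℝ} (hd : HasTwoTermExpansion (𝓝[>] 0) d l q a b)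
    (hg : HasTwoTermExpansion (𝓝[>] 0) g l⁻¹ (q / l) w0 w1)
    (hgd : ∀ᶠ s in 𝓝[>] 0, g (d s) = s) (hl : 0 < l) (hq : 0 < q) (ha : 0 < a) :
    w0 = a ^ (-l⁻¹) ∧ w1 = -l⁻¹ * a ^ (-(1 + q / l + l⁻¹)) * b :=
  have hmap : Tendsto d (𝓝[>] 0) (𝓝[>] 0) := hd.tendsto_nhdsGT_zero le_rfl hl hq ha
  (hg.mono hmap).unique (hd.map_leftInverse le_rfl hl hq ha hgd) hmap (div_pos hq hl)

end HasTwoTermExpansion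

section Flatness

variable {N : ℕ} {K : ℕ∞} {L : ℝ} {U : Set (Fin N → ℝ)} {μ0 : Fin N → ℝ}
  {ψ : ℝ → (Fin N → ℝ) → ℝ}

lemma mixedDeriv_zero (ψ : ℝ → (Fin N → ℝ) → ℝ) : mixedDeriv 0 0 ψ = ψ :=
  List.foldr_fixed _

lemma MemF.eventually_isBigO (h : MemF K L U μ0 ψ) :
    ∀ᶠ μ in 𝓝 μ0, (fun s => ψ s μ) =O[𝓝[>] 0] fun s => s ^ L := by
  obtain ⟨V, -, hV, C, -, s0, hs0, hbound⟩ := h.2 0 0 (by simp)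
  rw [mixedDeriv_zero, Nat.cast_zero, sub_zero] at hbound
  filter_upwards [hV] with μ hμ
  refine IsBigO.of_bound C ?_
  filter_upwards [Ioo_mem_nhdsGT hs0] with s hs
  rw [Real.norm_eq_abs, Real.norm_of_nonneg (Real.rpow_nonneg hs.1.le L)]
  exact hbound μ hμ s hs

lemma MemF.eventually_isLittleO (h : MemF K L U μ0 ψ) :
    ∀ᶠ μ in 𝓝 μ0, ∀ p < L, (fun s => ψ s μ) =o[𝓝[>] 0] fun s => s ^ p :=
  h.eventually_isBigO.mono fun _ hμ _ hp =>
    hμ.trans_isLittleO (isLittleO_rpow_rpow_nhdsGT_zero hp)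

end Flatness

theorem dulac_inverse_coeff_lt_one_general {N : ℕ} {K K' : ℕ∞} {U U' : Set (Fin N → ℝ)}
    {μ0 : Fin N → ℝ} {lam Δ00 Δ01 Ω00 Ω10 : (Fin N → ℝ) → ℝ}
    {D Dinv R R' : ℝ → (Fin N → ℝ) → ℝ} {ℓ η : ℝ}
    (hlam : ContinuousAt lam μ0) (hlampos : 0 < lam μ0) (hΔ00pos : ∀ᶠ μ in 𝓝 μ0, 0 < Δ00 μ)
    (hinv : ∀ᶠ μ in 𝓝 μ0, ∀ᶠ s in 𝓝[>] 0, Dinv (D s μ) μ = s)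
    (hℓ : lam μ0 < ℓ) (hR : MemF K ℓ U μ0 R)
    (hD : ∀ᶠ μ in 𝓝 μ0, ∀ᶠ s in 𝓝[>] 0,
      D s μ = s ^ lam μ * (Δ00 μ + Δ01 μ * s ^ lam μ + R s μ))
    (hη : 1 < η) (hR' : MemF K' η U' μ0 R')
    (hDinv : ∀ᶠ μ in 𝓝 μ0, ∀ᶠ s in 𝓝[>] 0,
      Dinv s μ = s ^ (lam μ)⁻¹ * (Ω00 μ + Ω10 μ * s + R' s μ)) :
    ∀ᶠ μ in 𝓝 μ0, Ω00 μ = Δ00 μ ^ (-(lam μ)⁻¹) ∧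
      Ω10 μ = -(lam μ)⁻¹ * Δ00 μ ^ (-(2 + (lam μ)⁻¹)) * Δ01 μ := by
  filter_upwards [hlam.eventually (lt_mem_nhds hlampos), hlam.eventually (gt_mem_nhds hℓ),
    hΔ00pos, hinv, hD, hDinv, hR.eventually_isLittleO, hR'.eventually_isLittleO]
    with μ hl hlℓ ha hgd hd hg hr hr'
  have hd' : HasTwoTermExpansion (𝓝[>] 0) (D · μ) (lam μ) (lam μ) (Δ00 μ) (Δ01 μ) :=
    .of_eventuallyEq le_rfl hd (hr _ hlℓ)
  have hg' : HasTwoTermExpansion (𝓝[>] 0) (Dinv · μ) (lam μ)⁻¹ (lam μ / lam μ) (Ω00 μ) (Ω10 μ) := by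
    rw [div_self hl.ne']
    exact .of_eventuallyEq le_rfl (by simpa only [Real.rpow_one] using hg) (hr' 1 hη)
  simpa only [div_self hl.ne', one_add_one_eq_two] using
    hd'.coeff_eq_of_leftInverse hg' hgd hl hl ha

/-- Lemma 4.11: coefficients of the inverse of a Dulac map when λ⁰ < 1. -/
theorem dulac_inverse_coeff_lt_one {N : ℕ} (U : Set (Fin N → ℝ)) (hU : IsOpen U)
    (μ0 : Fin N → ℝ) (hμ0 : μ0 ∈ U)
    (lam Δ00 Δ01 Ω00 Ω10 : (Fin N → ℝ) → ℝ)
    (hlam : ContDiffOn ℝ (⊤ : ℕ∞) lam U) (hΔ00 : ContDiffOn ℝ (⊤ : ℕ∞) Δ00 U)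
    (hΔ01 : ContDiffOn ℝ (⊤ : ℕ∞) Δ01 U) (hΩ00 : ContDiffOn ℝ (⊤ : ℕ∞) Ω00 U)
    (hΩ10 : ContDiffOn ℝ (⊤ : ℕ∞) Ω10 U)
    (hlampos : ∀ μ ∈ U, 0 < lam μ) (hΔ00pos : ∀ μ ∈ U, 0 < Δ00 μ)
    (hlamlt : lam μ0 < 1)
    (D Dinv : ℝ → (Fin N → ℝ) → ℝ)
    (hDpos : ∃ s0 > 0, ∀ μ ∈ U, ∀ s ∈ Set.Ioo (0:ℝ) s0, 0 < D s μ)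
    (hinv : ∃ s0 > 0, ∀ μ ∈ U, ∀ s ∈ Set.Ioo (0:ℝ) s0, Dinv (D s μ) μ = s)
    (hD : ∀ ℓ ∈ Set.Ioo (lam μ0) (min (2 * lam μ0) 1),
      ∃ R : ℝ → (Fin N → ℝ) → ℝ, MemF (⊤ : ℕ∞) ℓ U μ0 R ∧
        ∃ s0 > 0, ∀ μ ∈ U, ∀ s ∈ Set.Ioo (0:ℝ) s0,
          D s μ = s ^ lam μ * (Δ00 μ + Δ01 μ * s ^ lam μ + R s μ))
    (hDinv : ∀ η ∈ Set.Ioo (1:ℝ) (min (lam μ0)⁻¹ 2),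
      ∃ R' : ℝ → (Fin N → ℝ) → ℝ, MemF (⊤ : ℕ∞) η U μ0 R' ∧
        ∃ s0 > 0, ∀ μ ∈ U, ∀ s ∈ Set.Ioo (0:ℝ) s0,
          Dinv s μ = s ^ (lam μ)⁻¹ * (Ω00 μ + Ω10 μ * s + R' s μ)) :
    ∃ V ⊆ U, V ∈ 𝓝 μ0 ∧ ∀ μ ∈ V,
      Ω00 μ = (Δ00 μ) ^ (-(lam μ)⁻¹) ∧
      Ω10 μ = -(lam μ)⁻¹ * (Δ00 μ) ^ (-(2 + (lam μ)⁻¹)) * Δ01 μ := by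
  have hU0 : U ∈ 𝓝 μ0 := hU.mem_nhds hμ0
  have hl0 : 0 < lam μ0 := hlampos μ0 hμ0
  obtain ⟨ℓ, hℓ⟩ := nonempty_Ioo.2 (lt_min (lt_two_mul_self hl0) hlamlt)
  obtain ⟨η, hη⟩ := nonempty_Ioo.2 (lt_min ((one_lt_inv₀ hl0).2 hlamlt) one_lt_two)
  obtain ⟨R, hR, hDR⟩ := hD ℓ hℓ
  obtain ⟨R', hR', hDinvR'⟩ := hDinv η hη
  have hcoeff := dulac_inverse_coeff_lt_one_general
    (hlam.continuousOn.continuousAt hU0) hl0 (eventually_of_mem hU0 hΔ00pos)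
    (eventually_nhds_eventually_nhdsGT hU0 hinv)
    hℓ.1 hR (eventually_nhds_eventually_nhdsGT hU0 hDR)
    hη.1 hR' (eventually_nhds_eventually_nhdsGT hU0 hDinvR')
  exact ⟨_, inter_subset_left, inter_mem hU0 hcoeff, fun μ hμ => hμ.2⟩
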